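/- arXiv:2302.10118 — 2 statements merged into one kernel-verified Lean document; each statement's English description precedes it below -/
import Mathlib

section
/- Let d ∈ K_{2n} and let e_1,…,e_{2n} be the standard basis of ℂ^{2n}. Fix integers 1 ≤ x < y ≤ 2n. Then for every m ≥ 1 and every sequence of positive roots β_1,…,β_m ∈ Φ⁺ such that the matrix product f_{β_1}·f_{β_2}⋯f_{β_m} applied to e_x equals e_y or −e_y, one has d(β_1) + … + d(β_m) ≥ d(r(x,y)); moreover this bound is attained, since f_{r(x,y)}·e_x = ±e_y. -/
/-- Index of a positive root of `sp_{2n}`: `(i, j, false)` encodes `α_{i,j}` with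
`1 ≤ i ≤ j ≤ n`, and `(i, j, true)` encodes `α_{i,j̄}` with `1 ≤ i ≤ j ≤ n-1`. -/
def IsSpRootIdx (n : ℕ) (t : ℕ × ℕ × Bool) : Prop :=
  1 ≤ t.1 ∧ t.1 ≤ t.2.1 ∧ t.2.1 ≤ n ∧ (t.2.2 = true → t.2.1 + 1 ≤ n)

instance (n : ℕ) (t : ℕ × ℕ × Bool) : Decidable (IsSpRootIdx n t) :=
  inferInstanceAs (Decidable (1 ≤ t.1 ∧ t.1 ≤ t.2.1 ∧ t.2.1 ≤ n ∧ (t.2.2 = true → t.2.1 + 1 ≤ n)))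

/-- The set `Φ⁺` of positive roots of `sp_{2n}`. -/
def SpRoot (n : ℕ) : Type := {t : ℕ × ℕ × Bool // IsSpRootIdx n t}

/-- Normalised root index, implementing the convention `α_{i,n̄} := α_{i,n}`. -/
def rIdx (n i j : ℕ) (b : Bool) : ℕ × ℕ × Bool :=
  if b = true ∧ j = n then (i, j, false) else (i, j, b)
/-- Evaluate `d ∈ ℝ^{Φ⁺}` on a root index (value `0` outside `Φ⁺`). -/
noncomputable def dval {n : ℕ} (d : SpRoot n → ℝ) (t : ℕ × ℕ × Bool) : ℝ :=
  if h : IsSpRootIdx n t then d ⟨t, h⟩ else 0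

/-- `d_{i,j}`. -/
noncomputable def dA {n : ℕ} (d : SpRoot n → ℝ) (i j : ℕ) : ℝ := dval d (i, j, false)

/-- `d_{i,j̄}`, with the convention `d_{i,n̄} = d_{i,n}`. -/
noncomputable def dB {n : ℕ} (d : SpRoot n → ℝ) (i j : ℕ) : ℝ := dval d (rIdx n i j true)
inductive FacetKind
  | A | B | C | D
  deriving DecidableEq

/-- Labels of the `n(n-1)` defining inequalities (facets) of `K_{2n}`. -/
def Facets (n : ℕ) : Set (FacetKind × ℕ × ℕ) :=
  {f | (f.1 = FacetKind.A ∧ 1 ≤ f.2.1 ∧ f.2.1 + 1 ≤ n ∧ f.2.2 = f.2.1 + 1) ∨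
       (f.1 = FacetKind.B ∧ 1 ≤ f.2.1 ∧ f.2.1 < f.2.2 ∧ f.2.2 + 1 ≤ n) ∨
       (f.1 = FacetKind.C ∧ 1 ≤ f.2.1 ∧ f.2.1 < f.2.2 ∧ f.2.2 + 1 ≤ n) ∨
       (f.1 = FacetKind.D ∧ 1 ≤ f.2.1 ∧ f.2.1 + 1 ≤ n ∧ f.2.2 = f.2.1 + 1)}

/-- Left-hand side of the defining inequality with a given label. -/
noncomputable def facetLhs {n : ℕ} (d : SpRoot n → ℝ) : FacetKind × ℕ × ℕ → ℝ
  | (FacetKind.A, i, _) => dA d i i + dA d (i+1) (i+1)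
  | (FacetKind.B, i, j) => dA d i j + dA d (i+1) (j+1)
  | (FacetKind.C, i, j) => dB d i (j+1) + dB d (i+1) j
  | (FacetKind.D, i, _) => 2 * dB d i (i+1)

/-- Right-hand side of the defining inequality with a given label. -/
noncomputable def facetRhs {n : ℕ} (d : SpRoot n → ℝ) : FacetKind × ℕ × ℕ → ℝ
  | (FacetKind.A, i, _) => dA d i (i+1)
  | (FacetKind.B, i, j) => dA d i (j+1) + dA d (i+1) j
  | (FacetKind.C, i, j) => dB d i j + dB d (i+1) (j+1)
  | (FacetKind.D, i, _) => dB d i i + dB d (i+1) (i+1)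

/-- The symplectic FFLV degree cone `K_{2n} ⊆ ℝ^{Φ⁺}`. -/
def Kcone (n : ℕ) : Set (SpRoot n → ℝ) :=
  {d | ∀ f ∈ Facets n, facetRhs d f ≤ facetLhs d f}

/-- Points of `ℝ^{Φ⁺}` satisfying every defining inequality of `K_{2n}` strictly. -/
def KconeStrict (n : ℕ) : Set (SpRoot n → ℝ) :=
  {d | ∀ f ∈ Facets n, facetRhs d f < facetLhs d f}

/-- The elementary `2n × 2n` matrix with a `1` in row `p`, column `q` (rows and columns
numbered `1, …, 2n`) and `0` elsewhere. -/
noncomputable def Emat (n p q : ℕ) : Matrix (Fin (2*n)) (Fin (2*n)) ℂ :=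
  Matrix.of fun a b => if a.val + 1 = p ∧ b.val + 1 = q then 1 else 0

/-- The root vectors `f_β` of `sp_{2n}` as `2n × 2n` matrices:
`f_{i,ī} = E_{ī,i}`, `f_{i,j} = E_{j+1,i} - E_{ī,(j+1)̄}` for `j < n`,
`f_{i,j̄} = E_{j̄,i} + E_{ī,j}` for `i < j`, with `ī := 2n+1-i`, and the root
`α_{i,n} = α_{i,n̄}` (for `i < n`) carrying the vector `f_{i,n̄}`. -/
noncomputable def fvec (n : ℕ) : ℕ × ℕ × Bool → Matrix (Fin (2*n)) (Fin (2*n)) ℂ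
  | (i, j, false) =>
      if j < n then Emat n (j+1) i - Emat n (2*n+1-i) (2*n+1-(j+1))
      else if i < n then Emat n (n+1) i + Emat n (2*n+1-i) n
      else Emat n (n+1) n
  | (i, j, true) =>
      if i = j then Emat n (2*n+1-i) i
      else Emat n (2*n+1-j) i + Emat n (2*n+1-i) j

/-- The standard basis vector `e_x` of `ℂ^{2n}` (coordinates numbered `1, …, 2n`). -/
noncomputable def evec (n x : ℕ) : Fin (2*n) → ℂ :=
  fun a => if a.val + 1 = x then 1 else 0

/-- The positive root `r(x,y)` attached to `1 ≤ x < y ≤ 2n` (identifying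
`1 < ⋯ < n < n̄ < ⋯ < 1̄` with `{1, …, 2n}` via `ī = 2n+1-i`):
`r(x,y) = α_{x,y-1}` if `y ≤ n`; `r(x,y) = α_{x,(2n+1-y)̄}` if `x ≤ n < y ≤ 2n+1-x`;
`r(x,y) = α_{2n+1-y,x̄}` if `x ≤ n` and `y > 2n+1-x`; `r(x,y) = α_{2n+1-y,2n-x}` if `n < x`. -/
def rIdxXY (n x y : ℕ) : ℕ × ℕ × Bool :=
  if y ≤ n then (x, y - 1, false)
  else if x ≤ n then
    if y ≤ 2*n + 1 - x then rIdx n x (2*n + 1 - y) true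
    else rIdx n (2*n + 1 - y) x true
  else (2*n + 1 - y, 2*n - x, false)

lemma Emat_mulVec (n p q x : ℕ) (hx : 1 ≤ x) (hx2 : x ≤ 2*n) :
    (Emat n p q).mulVec (evec n x) = if q = x then evec n p else 0 := by
  ext a
  rw [Matrix.mulVec, dotProduct,
    Finset.sum_eq_single (⟨x - 1, by omega⟩ : Fin (2*n))]
  · have h : x - 1 + 1 = x := by omega
    by_cases hq : q = x
    · subst hq
      simp [Emat, evec, h]
    · have hq' : ¬ x = q := fun h => hq h.symm
      simp [Emat, evec, h, hq, hq']
  · intro b _ hb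
    have : ¬ (b.val + 1 = x) := by
      intro h
      apply hb
      ext
      simp
      omega
    simp [evec, this]
  · simp

lemma dval_eq {n : ℕ} (d : SpRoot n → ℝ) (b : SpRoot n) : d b = dval d b.val := by
  have := b.property
  simp only [dval, this, dif_pos]
  rfl

/-- A single root vector acts on a basis vector by zero or moves it along its own root. -/
lemma fvec_step (n : ℕ) (t : ℕ × ℕ × Bool) (ht : IsSpRootIdx n t) (x : ℕ) (hx : 1 ≤ x)
    (hx2 : x ≤ 2*n) :
    (fvec n t).mulVec (evec n x) = 0 ∨
    ∃ y, x < y ∧ y ≤ 2*n ∧ t = rIdxXY n x y ∧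
      ((fvec n t).mulVec (evec n x) = evec n y ∨ (fvec n t).mulVec (evec n x) = -(evec n y)) := by
  obtain ⟨i, j, b⟩ := t
  obtain ⟨h1, h2, h3, h4⟩ := ht
  simp only at h1 h2 h3 h4
  cases b with
  | false =>
    simp only [fvec]
    split_ifs with hj hi
    · rw [Matrix.sub_mulVec, Emat_mulVec _ _ _ _ hx hx2, Emat_mulVec _ _ _ _ hx hx2]
      by_cases c1 : i = x
      · right
        refine ⟨j+1, by omega, by omega, ?_, Or.inl ?_⟩
        · rw [rIdxXY, if_pos (by omega)]; simp [c1]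
        · rw [if_pos c1, if_neg (by omega), sub_zero]
      · by_cases c2 : 2*n+1-(j+1) = x
        · right
          refine ⟨2*n+1-i, by omega, by omega, ?_, Or.inr ?_⟩
          · rw [rIdxXY, if_neg (by omega), if_neg (by omega)]
            ext <;> simp <;> omega
          · rw [if_neg c1, if_pos c2, zero_sub]
        · left; rw [if_neg c1, if_neg c2, sub_zero]
    · rw [Matrix.add_mulVec, Emat_mulVec _ _ _ _ hx hx2, Emat_mulVec _ _ _ _ hx hx2]
      by_cases c1 : i = x
      · right
        refine ⟨n+1, by omega, by omega, ?_, Or.inl ?_⟩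
        · rw [rIdxXY, if_neg (by omega), if_pos (by omega), if_pos (by omega), rIdx,
            if_pos ⟨rfl, by omega⟩]
          ext <;> simp <;> omega
        · rw [if_pos c1, if_neg (by omega), add_zero]
      · by_cases c2 : n = x
        · right
          refine ⟨2*n+1-i, by omega, by omega, ?_, Or.inl ?_⟩
          · rw [rIdxXY, if_neg (by omega), if_pos (by omega), if_neg (by omega), rIdx,
              if_pos ⟨rfl, by omega⟩]
            ext <;> simp <;> omega
          · rw [if_neg c1, if_pos c2, zero_add]
        · left; rw [if_neg c1, if_neg c2, add_zero]
    · rw [Emat_mulVec _ _ _ _ hx hx2]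
      by_cases c2 : n = x
      · right
        refine ⟨n+1, by omega, by omega, ?_, Or.inl ?_⟩
        · rw [rIdxXY, if_neg (by omega), if_pos (by omega), if_pos (by omega), rIdx,
            if_pos ⟨rfl, by omega⟩]
          ext <;> simp <;> omega
        · rw [if_pos c2]
      · left; rw [if_neg c2]
  | true =>
    have h5 := h4 rfl
    simp only [fvec]
    split_ifs with hij
    · rw [Emat_mulVec _ _ _ _ hx hx2]
      by_cases c2 : i = x
      · right
        refine ⟨2*n+1-i, by omega, by omega, ?_, Or.inl ?_⟩
        · rw [rIdxXY, if_neg (by omega), if_pos (by omega), if_pos (by omega), rIdx,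
            if_neg (by omega)]
          ext <;> simp <;> omega
        · rw [if_pos c2]
      · left; rw [if_neg c2]
    · rw [Matrix.add_mulVec, Emat_mulVec _ _ _ _ hx hx2, Emat_mulVec _ _ _ _ hx hx2]
      by_cases c1 : i = x
      · right
        refine ⟨2*n+1-j, by omega, by omega, ?_, Or.inl ?_⟩
        · rw [rIdxXY, if_neg (by omega), if_pos (by omega), if_pos (by omega), rIdx,
            if_neg (by omega)]
          ext <;> simp <;> omega
        · rw [if_pos c1, if_neg (by omega), add_zero]
      · by_cases c2 : j = x
        · right
          refine ⟨2*n+1-i, by omega, by omega, ?_, Or.inl ?_⟩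
          · rw [rIdxXY, if_neg (by omega), if_pos (by omega), if_neg (by omega), rIdx,
              if_neg (by omega)]
            ext <;> simp <;> omega
          · rw [if_neg c1, if_pos c2, zero_add]
        · left; rw [if_neg c1, if_neg c2, add_zero]

/-- The root `r(x,y)` moves `e_x` to `±e_y`. -/
lemma fvec_attain (n x y : ℕ) (hx : 1 ≤ x) (hxy : x < y) (hy : y ≤ 2*n) :
    (fvec n (rIdxXY n x y)).mulVec (evec n x) = evec n y ∨
     (fvec n (rIdxXY n x y)).mulVec (evec n x) = -(evec n y) := by
  have hx2 : x ≤ 2*n := by omega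
  have E := fun p q => Emat_mulVec n p q x hx hx2
  unfold rIdxXY rIdx
  split_ifs with h1 h2 h3 h4 h4
  · left
    simp only [fvec]
    rw [if_pos (by omega), Matrix.sub_mulVec, E, E, if_pos rfl, if_neg (by omega), sub_zero]
    congr 1; omega
  · left
    simp only [fvec]
    rw [if_neg (by omega)]
    split_ifs with h5
    · rw [Matrix.add_mulVec, E, E, if_pos rfl, if_neg (by omega), add_zero]
      congr 1; omega
    · rw [E, if_pos (by omega)]
      congr 1; omega
  · left
    simp only [fvec]
    split_ifs with h5
    · rw [E, if_pos rfl]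
      congr 1; omega
    · rw [Matrix.add_mulVec, E, E, if_pos rfl, if_neg (by omega), add_zero]
      congr 1; omega
  · left
    simp only [fvec]
    rw [if_neg (by omega), if_pos (by omega), Matrix.add_mulVec, E, E, if_neg (by omega),
      if_pos (by omega), zero_add]
    congr 1; omega
  · left
    simp only [fvec]
    rw [if_neg (by omega), Matrix.add_mulVec, E, E, if_neg (by omega),
      if_pos (by omega), zero_add]
    congr 1; omega
  · right
    simp only [fvec]
    rw [if_pos (by omega), Matrix.sub_mulVec, E, E, if_neg (by omega),
      if_pos (by omega), zero_sub]
    congr 2; omega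

/-- The distance function `D(x,y) = d(r(x,y))`, extended by `D(x,x) = 0`. -/
noncomputable def Dxy {n : ℕ} (d : SpRoot n → ℝ) (x y : ℕ) : ℝ :=
  if x < y then dval d (rIdxXY n x y) else 0

lemma Dxy_symm {n : ℕ} (d : SpRoot n → ℝ) (x y : ℕ) (hx : 1 ≤ x) (hxy : x ≤ y)
    (hy : y ≤ 2*n) : Dxy d x y = Dxy d (2*n+1-y) (2*n+1-x) := by
  unfold Dxy
  by_cases h : x < y
  · rw [if_pos h, if_pos (by omega)]
    congr 1
    unfold rIdxXY
    by_cases h1 : y ≤ n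
    · rw [if_pos h1, if_neg (by omega), if_neg (by omega)]
      ext <;> simp <;> omega
    · by_cases h2 : x ≤ n
      · have e1 : ¬ (2*n+1-x ≤ n) := by omega
        have e2 : 2*n+1-y ≤ n := by omega
        rw [if_neg h1, if_pos h2, if_neg e1, if_pos e2]
        by_cases h3 : y ≤ 2*n+1-x
        · rw [if_pos h3]
          by_cases h4 : y = 2*n+1-x
          · have e3 : 2*n+1-x ≤ 2*n+1-(2*n+1-y) := by omega
            rw [if_pos e3]
            congr 1 <;> omega
          · have e3 : ¬ (2*n+1-x ≤ 2*n+1-(2*n+1-y)) := by omega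
            rw [if_neg e3]
            congr 1; omega
        · have e3 : 2*n+1-x ≤ 2*n+1-(2*n+1-y) := by omega
          rw [if_neg h3, if_pos e3]
          congr 1; omega
      · rw [if_neg h1, if_neg h2, if_pos (by omega)]
        ext <;> simp; omega
  · rw [if_neg h, if_neg (by omega)]

lemma Dxy_A {n : ℕ} (d : SpRoot n → ℝ) (i j : ℕ) (hij : i ≤ j) (hj : j ≤ n) :
    dA d i j = Dxy d i (j+1) := by
  rw [dA, Dxy, if_pos (by omega), rIdxXY]
  congr 1
  split_ifs with h1 h2 h3
  · simp
  · rw [rIdx, if_pos ⟨rfl, by omega⟩]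
    ext <;> simp; omega
  · omega
  · omega

lemma Dxy_B {n : ℕ} (d : SpRoot n → ℝ) (i j : ℕ) (hij : i ≤ j) (hj : j ≤ n) (hn : 1 ≤ n) :
    dB d i j = Dxy d i (2*n+1-j) := by
  rw [dB, Dxy, if_pos (by omega), rIdxXY, if_neg (by omega), if_pos (by omega),
    if_pos (by omega)]
  congr 2; omega

lemma Dxy_local_half {n : ℕ} (d : SpRoot n → ℝ) (hd : d ∈ Kcone n) (x y : ℕ) (hx : 1 ≤ x)
    (hxy : x < y) (hy : x + y ≤ 2*n) :
    Dxy d x (y+1) + Dxy d (x+1) y ≤ Dxy d x y + Dxy d (x+1) (y+1) := by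
  by_cases h1 : y ≤ n
  · by_cases h2 : y = x + 1
    · have h := hd (FacetKind.A, x, x+1) (Or.inl ⟨rfl, hx, by simp; omega, rfl⟩)
      simp only [facetLhs, facetRhs] at h
      rw [Dxy_A d _ _ (by omega) (by omega), Dxy_A d _ _ (by omega) (by omega),
        Dxy_A d _ _ (by omega) (by omega)] at h
      subst h2
      have h0 : Dxy d (x+1) (x+1) = 0 := by simp [Dxy]
      linarith
    · obtain ⟨j, rfl⟩ : ∃ j, y = j + 1 := ⟨y - 1, by omega⟩
      have h := hd (FacetKind.B, x, j) (Or.inr (Or.inl ⟨rfl, hx, by simp; omega, by simp; omega⟩))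
      simp only [facetLhs, facetRhs] at h
      rw [Dxy_A d _ _ (by omega) (by omega), Dxy_A d _ _ (by omega) (by omega),
        Dxy_A d _ _ (by omega) (by omega), Dxy_A d _ _ (by omega) (by omega)] at h
      linarith
  · by_cases h2 : x + y = 2*n
    · have h := hd (FacetKind.D, x, x+1)
        (Or.inr (Or.inr (Or.inr ⟨rfl, hx, by simp; omega, rfl⟩)))
      simp only [facetLhs, facetRhs] at h
      rw [Dxy_B d _ _ (by omega) (by omega) (by omega),
        Dxy_B d _ _ (by omega) (by omega) (by omega),
        Dxy_B d _ _ (by omega) (by omega) (by omega)] at h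
      have hs := Dxy_symm d x y hx (by omega) (by omega)
      rw [show 2*n+1-(x+1) = y by omega, show 2*n+1-x = y+1 by omega] at h
      rw [show 2*n+1-y = x+1 by omega, show 2*n+1-x = y+1 by omega] at hs
      linarith
    · have h := hd (FacetKind.C, x, 2*n-y)
        (Or.inr (Or.inr (Or.inl ⟨rfl, hx, by simp; omega, by simp; omega⟩)))
      simp only [facetLhs, facetRhs] at h
      rw [Dxy_B d _ _ (by omega) (by omega) (by omega),
        Dxy_B d _ _ (by omega) (by omega) (by omega),
        Dxy_B d _ _ (by omega) (by omega) (by omega),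
        Dxy_B d _ _ (by omega) (by omega) (by omega)] at h
      rw [show 2*n+1-(2*n-y+1) = y by omega, show 2*n+1-(2*n-y) = y+1 by omega] at h
      linarith

lemma Dxy_local {n : ℕ} (d : SpRoot n → ℝ) (hd : d ∈ Kcone n) (x y : ℕ) (hx : 1 ≤ x)
    (hxy : x < y) (hy : y + 1 ≤ 2*n) :
    Dxy d x (y+1) + Dxy d (x+1) y ≤ Dxy d x y + Dxy d (x+1) (y+1) := by
  by_cases h : x + y ≤ 2*n
  · exact Dxy_local_half d hd x y hx hxy h
  · have := Dxy_local_half d hd (2*n-y) (2*n-x) (by omega) (by omega) (by omega)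
    rw [Dxy_symm d x (y+1) (by omega) (by omega) (by omega),
      Dxy_symm d (x+1) y (by omega) (by omega) (by omega),
      Dxy_symm d x y (by omega) (by omega) (by omega),
      Dxy_symm d (x+1) (y+1) (by omega) (by omega) (by omega)]
    rw [show 2*n+1-(y+1) = 2*n-y by omega, show 2*n+1-(x+1) = 2*n-x by omega,
      show 2*n+1-x = 2*n-x+1 by omega, show 2*n+1-y = 2*n-y+1 by omega]
    linarith

lemma Dxy_strip {n : ℕ} (d : SpRoot n → ℝ) (hd : d ∈ Kcone n) (x y : ℕ) (hx : 1 ≤ x)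
    (hxy : x < y) (k : ℕ) (hy : y + k ≤ 2*n) :
    Dxy d x (y+k) + Dxy d (x+1) y ≤ Dxy d x y + Dxy d (x+1) (y+k) := by
  induction k with
  | zero => simp
  | succ k ih =>
    have h1 := ih (by omega)
    have h2 := Dxy_local d hd x (y+k) hx (by omega) (by omega)
    rw [← add_assoc]
    linarith

lemma Dxy_rect {n : ℕ} (d : SpRoot n → ℝ) (hd : d ∈ Kcone n) (x y k l : ℕ) (hx : 1 ≤ x)
    (hxy : x + l ≤ y) (hy : y + k ≤ 2*n) :
    Dxy d x (y+k) + Dxy d (x+l) y ≤ Dxy d x y + Dxy d (x+l) (y+k) := by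
  induction l with
  | zero => simp; linarith
  | succ l ih =>
    have h1 := ih (by omega)
    have h2 := Dxy_strip d hd (x+l) y (by omega) (by omega) k hy
    rw [← add_assoc]
    linarith

lemma Dxy_triangle {n : ℕ} (d : SpRoot n → ℝ) (hd : d ∈ Kcone n) (x y z : ℕ) (hx : 1 ≤ x)
    (hxy : x ≤ y) (hyz : y ≤ z) (hz : z ≤ 2*n) :
    Dxy d x z ≤ Dxy d x y + Dxy d y z := by
  have h := Dxy_rect d hd x y (z-y) (y-x) hx (by omega) (by omega)
  rw [show x + (y-x) = y by omega, show y + (z-y) = z by omega] at h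
  have h0 : Dxy d y y = 0 := by simp [Dxy]
  linarith

lemma list_step {n : ℕ} (d : SpRoot n → ℝ) (hd : d ∈ Kcone n) (x : ℕ) (hx : 1 ≤ x)
    (hx2 : x ≤ 2*n) (l : List (SpRoot n)) :
    (l.map fun b => fvec n b.val).prod.mulVec (evec n x) = 0 ∨
    ∃ z, x ≤ z ∧ z ≤ 2*n ∧ Dxy d x z ≤ (l.map d).sum ∧
      ((l.map fun b => fvec n b.val).prod.mulVec (evec n x) = evec n z ∨
       (l.map fun b => fvec n b.val).prod.mulVec (evec n x) = -(evec n z)) := by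
  induction l with
  | nil => right; exact ⟨x, le_rfl, hx2, by simp [Dxy], by simp⟩
  | cons b l ih =>
    rw [List.map_cons, List.prod_cons, List.map_cons, List.sum_cons, ← Matrix.mulVec_mulVec]
    rcases ih with h | ⟨z, hxz, hz, hD, hv⟩
    · left; rw [h, Matrix.mulVec_zero]
    · rcases fvec_step n b.val b.property z (by omega) hz with h | ⟨w, hzw, hw, hb, hv'⟩
      · left
        rcases hv with hv | hv <;> rw [hv]
        · exact h
        · rw [Matrix.mulVec_neg, h, neg_zero]
      · right
        refine ⟨w, by omega, hw, ?_, ?_⟩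
        · have ht := Dxy_triangle d hd x z w hx hxz hzw.le hw
          have hb' : d b = Dxy d z w := by rw [dval_eq d b, hb, Dxy, if_pos hzw]
          linarith
        · rcases hv with hv | hv <;> rcases hv' with hv' | hv' <;>
            simp [hv, hv', Matrix.mulVec_neg]

lemma evec_inj (n y z : ℕ) (hy : 1 ≤ y) (hy2 : y ≤ 2*n)
    (h : evec n z = evec n y ∨ evec n z = -(evec n y)) : z = y := by
  by_contra hne
  have hne' : ¬ y = z := fun h => hne h.symm
  have h1 : y - 1 + 1 = y := by omega
  rcases h with h | h <;>
  · have := congrFun h ⟨y - 1, by omega⟩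
    simp [evec, h1, hne'] at this

/-- Let `d ∈ K_{2n}` and `1 ≤ x < y ≤ 2n`. For every `m ≥ 1` and every
sequence `β₁, …, β_m` of positive roots such that `f_{β₁}⋯f_{β_m}·e_x = ±e_y` one has
`d(β₁) + ⋯ + d(β_m) ≥ d(r(x,y))`; moreover the bound is attained, since
`f_{r(x,y)}·e_x = ±e_y`. -/
theorem spFFLV_min_on_M (n : ℕ) (hn : 2 ≤ n)
    (d : SpRoot n → ℝ) (hd : d ∈ Kcone n)
    (x y : ℕ) (hx : 1 ≤ x) (hxy : x < y) (hy : y ≤ 2*n) :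
    (∀ m : ℕ, 1 ≤ m → ∀ β : Fin m → SpRoot n,
      ((List.ofFn fun r => fvec n (β r).val).prod.mulVec (evec n x) = evec n y ∨
       (List.ofFn fun r => fvec n (β r).val).prod.mulVec (evec n x) = -(evec n y)) →
      dval d (rIdxXY n x y) ≤ ∑ r, d (β r)) ∧
    ((fvec n (rIdxXY n x y)).mulVec (evec n x) = evec n y ∨
     (fvec n (rIdxXY n x y)).mulVec (evec n x) = -(evec n y)) := by
  refine ⟨?_, fvec_attain n x y hx hxy hy⟩
  intro m _ β hβ
  have hl := list_step d hd x hx (by omega) (List.ofFn β)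
  rw [List.map_ofFn, List.map_ofFn, List.sum_ofFn] at hl
  simp only [Function.comp_def] at hl
  have hyne : evec n y ≠ 0 := by
    intro h
    have := congrFun h ⟨y - 1, by omega⟩
    simp [evec, show y - 1 + 1 = y by omega] at this
  rcases hl with h | ⟨z, hxz, hz, hD, hv⟩
  · exfalso
    rcases hβ with hβ | hβ
    · exact hyne (hβ.symm.trans h)
    · exact hyne (neg_eq_zero.mp (hβ.symm.trans h))
  · have hzy : z = y := by
      apply evec_inj n y z (by omega) hy
      rcases hv with hv | hv <;> rcases hβ with hβ | hβ <;> rw [hv] at hβ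
      · exact Or.inl hβ
      · exact Or.inr hβ
      · exact Or.inr (neg_eq_iff_eq_neg.mp hβ)
      · exact Or.inl (neg_inj.mp hβ)
    subst hzy
    rwa [Dxy, if_pos hxy] at hD
end

section
/- Let d ∈ ℝ^{Φ⁺} satisfy every defining inequality of K_{2n} strictly. Then for all integers 1 ≤ a < b < c < e ≤ 2n the strict rectangle-exchange inequality holds: d(r(a,e)) + d(r(b,c)) < d(r(a,c)) + d(r(b,e)). (This is the statement that, for disjoint increasing index sets, the linear functional σ ↦ Σ_r d(r(i_r, j_{σ(r)})) on permutations strictly decreases along covering relations of the Bruhat order.) -/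
theorem dB_n {n : ℕ} (d : SpRoot n → ℝ) (i : ℕ) : dB d i n = dA d i n := by
  simp [dB, dA, rIdx]

theorem F_one {n : ℕ} (d : SpRoot n → ℝ) (x y k : ℕ) (hx : x ≤ n) (hk : k + 1 = y)
    (hy : y ≤ n + 1) : dval d (rIdxXY n x y) = dA d x k := by
  subst hk
  by_cases h : k + 1 ≤ n
  · simp [rIdxXY, h, dA]
  · have hkn : k = n := by omega
    subst hkn
    have h2 : k + 1 ≤ 2 * k + 1 - x := by omega
    have h3 : 2 * k + 1 - (k + 1) = k := by omega
    simp only [rIdxXY, h, if_false, hx, if_true, h2, h3]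
    exact dB_n d x

theorem F_two {n : ℕ} (d : SpRoot n → ℝ) (x y k : ℕ) (hx : x ≤ n) (hy : n < y)
    (hk : k + y = 2 * n + 1) (hxk : x ≤ k) : dval d (rIdxXY n x y) = dB d x k := by
  have h1 : ¬ y ≤ n := by omega
  have h2 : y ≤ 2 * n + 1 - x := by omega
  have h3 : 2 * n + 1 - y = k := by omega
  simp only [rIdxXY, h1, if_false, hx, if_true, h2, h3]
  rfl

theorem F_three {n : ℕ} (d : SpRoot n → ℝ) (x y k : ℕ) (hx : x ≤ n) (hy : n < y)
    (hk : k + y = 2 * n + 1) (hxk : k ≤ x) : dval d (rIdxXY n x y) = dB d k x := by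
  rcases Nat.eq_or_lt_of_le hxk with h | h
  · subst h
    exact F_two d k y k hx hy hk le_rfl
  have h1 : ¬ y ≤ n := by omega
  have h2 : ¬ y ≤ 2 * n + 1 - x := by omega
  have h3 : 2 * n + 1 - y = k := by omega
  simp only [rIdxXY, h1, if_false, hx, if_true, h2, h3]
  rfl

theorem F_four {n : ℕ} (d : SpRoot n → ℝ) (x y k l : ℕ) (hx : n ≤ x) (hy : x < y)
    (hk : k + y = 2 * n + 1) (hl : l + x = 2 * n) : dval d (rIdxXY n x y) = dA d k l := by
  rcases Nat.eq_or_lt_of_le hx with h | h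
  · subst h
    have hln : l = n := by omega
    subst hln
    rw [F_three d l y k le_rfl hy hk (by omega), dB_n]
  have h1 : ¬ y ≤ n := by omega
  have h2 : ¬ x ≤ n := by omega
  have h3 : 2 * n + 1 - y = k := by omega
  have h4 : 2 * n - x = l := by omega
  simp only [rIdxXY, h1, if_false, h2, h3, h4]
  rfl

theorem facet_B {n : ℕ} {d : SpRoot n → ℝ} (hd : d ∈ KconeStrict n) (i j : ℕ)
    (h1 : 1 ≤ i) (h2 : i < j) (h3 : j + 1 ≤ n) :
    dA d i (j+1) + dA d (i+1) j < dA d i j + dA d (i+1) (j+1) :=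
  hd (FacetKind.B, i, j) (Or.inr (Or.inl ⟨rfl, h1, h2, h3⟩))

theorem facet_C {n : ℕ} {d : SpRoot n → ℝ} (hd : d ∈ KconeStrict n) (i j : ℕ)
    (h1 : 1 ≤ i) (h2 : i < j) (h3 : j + 1 ≤ n) :
    dB d i j + dB d (i+1) (j+1) < dB d i (j+1) + dB d (i+1) j :=
  hd (FacetKind.C, i, j) (Or.inr (Or.inr (Or.inl ⟨rfl, h1, h2, h3⟩)))

theorem facet_D {n : ℕ} {d : SpRoot n → ℝ} (hd : d ∈ KconeStrict n) (i : ℕ)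
    (h1 : 1 ≤ i) (h3 : i + 1 ≤ n) :
    dB d i i + dB d (i+1) (i+1) < 2 * dB d i (i+1) :=
  hd (FacetKind.D, i, i + 1) (Or.inr (Or.inr (Or.inr ⟨rfl, h1, h3, rfl⟩)))

/-- The exchange inequality on unit rectangles. -/
theorem unit_exchange {n : ℕ} {d : SpRoot n → ℝ} (hd : d ∈ KconeStrict n) (x y : ℕ)
    (hx : 1 ≤ x) (hxy : x + 1 < y) (hy : y + 1 ≤ 2 * n) :
    dval d (rIdxXY n x (y+1)) + dval d (rIdxXY n (x+1) y) <
      dval d (rIdxXY n x y) + dval d (rIdxXY n (x+1) (y+1)) := by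
  by_cases c1 : y ≤ n
  · obtain ⟨k, rfl⟩ : ∃ k, y = k + 1 := ⟨y - 1, by omega⟩
    rw [F_one d x (k+1+1) (k+1) (by omega) (by omega) (by omega),
      F_one d (x+1) (k+1) k (by omega) (by omega) (by omega),
      F_one d x (k+1) k (by omega) (by omega) (by omega),
      F_one d (x+1) (k+1+1) (k+1) (by omega) (by omega) (by omega)]
    exact facet_B hd x k hx (by omega) (by omega)
  obtain ⟨j, hj⟩ : ∃ j, j + y = 2 * n := ⟨2 * n - y, by omega⟩
  by_cases c2 : x + 1 ≤ n
  · rcases lt_trichotomy x j with h | h | h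
    · rw [F_two d x (y+1) j (by omega) (by omega) (by omega) (by omega),
        F_two d (x+1) y (j+1) (by omega) (by omega) (by omega) (by omega),
        F_two d x y (j+1) (by omega) (by omega) (by omega) (by omega),
        F_two d (x+1) (y+1) j (by omega) (by omega) (by omega) (by omega)]
      exact facet_C hd x j hx h (by omega)
    · subst h
      rw [F_two d x (y+1) x (by omega) (by omega) (by omega) (by omega),
        F_two d (x+1) y (x+1) (by omega) (by omega) (by omega) (by omega),
        F_two d x y (x+1) (by omega) (by omega) (by omega) (by omega),
        F_three d (x+1) (y+1) x (by omega) (by omega) (by omega) (by omega)]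
      have := facet_D hd x hx (by omega)
      linarith
    · rw [F_three d x (y+1) j (by omega) (by omega) (by omega) (by omega),
        F_three d (x+1) y (j+1) (by omega) (by omega) (by omega) (by omega),
        F_three d x y (j+1) (by omega) (by omega) (by omega) (by omega),
        F_three d (x+1) (y+1) j (by omega) (by omega) (by omega) (by omega)]
      have := facet_C hd j x (by omega) h (by omega)
      linarith
  · obtain ⟨l, hl⟩ : ∃ l, l + x + 1 = 2 * n := ⟨2 * n - x - 1, by omega⟩
    rw [F_four d x (y+1) j (l+1) (by omega) (by omega) (by omega) (by omega),
      F_four d (x+1) y (j+1) l (by omega) (by omega) (by omega) (by omega),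
      F_four d x y (j+1) (l+1) (by omega) (by omega) (by omega) (by omega),
      F_four d (x+1) (y+1) j l (by omega) (by omega) (by omega) (by omega)]
    have := facet_B hd j l (by omega) (by omega) (by omega)
    linarith

theorem strip_exchange {n : ℕ} {d : SpRoot n → ℝ} (hd : d ∈ KconeStrict n) (x c e : ℕ)
    (hx : 1 ≤ x) (hxc : x + 1 < c) (hce : c + 1 ≤ e) (he : e ≤ 2 * n) :
    dval d (rIdxXY n x e) + dval d (rIdxXY n (x+1) c) <
      dval d (rIdxXY n x c) + dval d (rIdxXY n (x+1) e) := by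
  induction e, hce using Nat.le_induction with
  | base => exact unit_exchange hd x c hx hxc he
  | succ m hm ih =>
    have h1 := ih (by omega)
    have h2 := unit_exchange hd x m hx (by omega) he
    linarith

theorem rect_exchange {n : ℕ} {d : SpRoot n → ℝ} (hd : d ∈ KconeStrict n) (a b c e : ℕ)
    (ha : 1 ≤ a) (hab : a + 1 ≤ b) (hbc : b < c) (hce : c < e) (he : e ≤ 2 * n) :
    dval d (rIdxXY n a e) + dval d (rIdxXY n b c) <
      dval d (rIdxXY n a c) + dval d (rIdxXY n b e) := by
  induction b, hab using Nat.le_induction with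
  | base => exact strip_exchange hd a c e ha hbc hce he
  | succ m hm ih =>
    have h1 := ih (by omega)
    have h2 := strip_exchange hd m c e (by omega) hbc hce he
    linarith

/-- If `d` satisfies every defining inequality of `K_{2n}` strictly, then for
all `1 ≤ a < b < c < e ≤ 2n` the strict rectangle-exchange inequality
`d(r(a,e)) + d(r(b,c)) < d(r(a,c)) + d(r(b,e))` holds. -/
theorem spFFLV_rectangle_exchange (n : ℕ) (hn : 2 ≤ n)
    (d : SpRoot n → ℝ) (hd : d ∈ KconeStrict n)
    (a b c e : ℕ) (ha : 1 ≤ a) (hab : a < b) (hbc : b < c) (hce : c < e) (he : e ≤ 2*n) :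
    dval d (rIdxXY n a e) + dval d (rIdxXY n b c) <
      dval d (rIdxXY n a c) + dval d (rIdxXY n b e) := by
  exact rect_exchange hd a b c e ha hab hbc hce he
end
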